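/- arXiv:1910.13469 — 4 statements merged into one kernel-verified Lean document; each statement's English description precedes it below -/
import Mathlib

section
/- Let 0 < β < 1. There exists a unique function φ : ℝ → ℝ such that φ(x) = tanh(β·(x + φ(x))) for every x ∈ ℝ; moreover −1 < φ(x) < 1 for every x ∈ ℝ. -/
/-!
For every `x` the map `m ↦ tanh (β * (x + m))` is continuous with values in `[-1, 1]`, so it has a
fixed point. Uniqueness amounts to `m ↦ m - tanh (β * (x + m))` being strictly increasing. For
`β ≤ 0` this holds because `tanh` is increasing; for `0 < β ≤ 1` it holds because `u ↦ u - tanh u`,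
whose derivative is `tanh u ^ 2`, is strictly increasing. The critical value `β = 1` is included
since that derivative vanishes only at `0`.
-/

open Set

lemma hasDerivAt_tanh (u : ℝ) : HasDerivAt Real.tanh (1 - Real.tanh u ^ 2) u := by
  have hcosh : Real.cosh u ≠ 0 := (Real.cosh_pos u).ne'
  have htanh : Real.tanh = Real.sinh / Real.cosh := funext Real.tanh_eq_sinh_div_cosh
  have hvalue : 1 - Real.tanh u ^ 2 =
      (Real.cosh u * Real.cosh u - Real.sinh u * Real.sinh u) / Real.cosh u ^ 2 := by
    rw [Real.tanh_eq_sinh_div_cosh]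
    field_simp
  rw [hvalue, htanh]
  exact (Real.hasDerivAt_sinh u).div (Real.hasDerivAt_cosh u) hcosh

lemma differentiable_tanh : Differentiable ℝ Real.tanh :=
  fun u => (hasDerivAt_tanh u).differentiableAt

lemma tanh_strictMono : StrictMono Real.tanh :=
  strictMono_of_deriv_pos fun u => by
    rw [(hasDerivAt_tanh u).deriv, sub_pos]
    exact Real.tanh_sq_lt_one u

lemma id_sub_tanh_strictMono : StrictMono fun u : ℝ => u - Real.tanh u := by
  have hderiv (u : ℝ) : HasDerivAt (fun u : ℝ => u - Real.tanh u) (Real.tanh u ^ 2) u :=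
    sub_sub_cancel 1 (Real.tanh u ^ 2) ▸ (hasDerivAt_id' u).sub (hasDerivAt_tanh u)
  refine strictMono_of_odd_strictMonoOn_nonneg (fun u => by rw [Real.tanh_neg]; ring) ?_
  refine strictMonoOn_of_deriv_pos (convex_Ici 0)
    (continuous_id.sub differentiable_tanh.continuous).continuousOn fun u hu => ?_
  rw [interior_Ici, mem_Ioi] at hu
  have htanh : 0 < Real.tanh u := Real.tanh_zero ▸ tanh_strictMono hu
  rw [(hderiv u).deriv]
  exact pow_pos htanh 2

lemma strictMono_sub_comp_mul_add {f : ℝ → ℝ} (hf : Monotone f)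
    (hf_sub : StrictMono fun u => u - f u) {β : ℝ} (hβ : β ≤ 1) (x : ℝ) :
    StrictMono fun m => m - f (β * (x + m)) := by
  intro a b hab
  rcases le_or_gt β 0 with hβ0 | hβ0
  · have hle : β * (x + b) ≤ β * (x + a) :=
      mul_le_mul_of_nonpos_left (by linarith) hβ0
    linarith [hf hle]
  · have hlt : β * (x + a) < β * (x + b) := by gcongr
    have hsub : β * (x + a) - f (β * (x + a)) < β * (x + b) - f (β * (x + b)) := hf_sub hlt
    have hmul : β * (b - a) ≤ b - a := mul_le_of_le_one_left (sub_nonneg.2 hab.le) hβ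
    linarith

lemma exists_eq_tanh_mul_add (β x : ℝ) : ∃ m, m = Real.tanh (β * (x + m)) := by
  have hcont : Continuous fun m => Real.tanh (β * (x + m)) :=
    differentiable_tanh.continuous.comp (by fun_prop)
  have hmaps : MapsTo (fun m => Real.tanh (β * (x + m))) (Icc (-1) 1) (Icc (-1) 1) :=
    fun _ _ => ⟨(Real.neg_one_lt_tanh _).le, (Real.tanh_lt_one _).le⟩
  obtain ⟨m, -, hm⟩ :=
    exists_mem_Icc_isFixedPt_of_mapsTo hcont.continuousOn (by norm_num) hmaps
  exact ⟨m, hm.symm⟩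

lemma existsUnique_eq_tanh_mul_add {β : ℝ} (hβ : β ≤ 1) (x : ℝ) :
    ∃! m, m = Real.tanh (β * (x + m)) := by
  obtain ⟨m, hm⟩ := exists_eq_tanh_mul_add β x
  have hmono := strictMono_sub_comp_mul_add tanh_strictMono.monotone id_sub_tanh_strictMono hβ x
  exact ⟨m, hm, fun n hn =>
    hmono.injective ((sub_eq_zero_of_eq hn).trans (sub_eq_zero_of_eq hm).symm)⟩

theorem exists_unique_invariant_curve_general {β : ℝ} (hβ : β ≤ 1) :
    (∃! φ : ℝ → ℝ, ∀ x, φ x = Real.tanh (β * (x + φ x))) ∧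
    (∀ φ : ℝ → ℝ, (∀ x, φ x = Real.tanh (β * (x + φ x))) →
      ∀ x, -1 < φ x ∧ φ x < 1) := by
  constructor
  · obtain ⟨φ, hφ⟩ := forall_existsUnique_iff.1 (existsUnique_eq_tanh_mul_add hβ)
    exact ⟨φ, fun _ => hφ.2 rfl, fun ψ hψ => funext fun x => (hφ.1 (hψ x)).symm⟩
  · intro φ hφ x
    rw [hφ x]
    exact ⟨Real.neg_one_lt_tanh _, Real.tanh_lt_one _⟩

/-- Subcritical case 0 < β < 1: the relation m = tanh(β(x + m)) can be solved uniquely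
for m as a function of x, and the solution takes values in (−1, 1). -/
theorem exists_unique_invariant_curve (β : ℝ) (h0 : 0 < β) (h1 : β < 1) :
    (∃! φ : ℝ → ℝ, ∀ x, φ x = Real.tanh (β * (x + φ x))) ∧
    (∀ φ : ℝ → ℝ, (∀ x, φ x = Real.tanh (β * (x + φ x))) →
      ∀ x, -1 < φ x ∧ φ x < 1) :=
  exists_unique_invariant_curve_general h1.le
end

section
/- Let β > 1, m_a := √(1 − 1/β), λ_a := (1/β)·artanh(√(1 − 1/β)), and define g : (−1,1) → ℝ by g(y) := 2βy − 2β(m_a − λ_a) − log(1+y) + log(1−y). Then g(m_a) = 0, and there exists a unique m_b ∈ (−1,1) with m_b ≠ m_a and g(m_b) = 0; moreover m_b < −m_a, m_a is a local maximum of g and −m_a is a local minimum of g, and g(y) → +∞ as y → −1⁺. -/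
/-- Inverse hyperbolic tangent: artanh(y) = (1/2)·log((1+y)/(1−y)). -/
noncomputable def artanh (y : ℝ) : ℝ := (1/2) * Real.log ((1 + y) / (1 - y))

/-- The critical ordinate m_a(β) = √(1 − 1/β). -/
noncomputable def mCrit (β : ℝ) : ℝ := Real.sqrt (1 - 1/β)

/-- The critical abscissa λ_a(β) = (1/β)·artanh(√(1 − 1/β)). -/
noncomputable def lCrit (β : ℝ) : ℝ := (1/β) * artanh (Real.sqrt (1 - 1/β))

/-- The function g(y) = 2βy − 2β(m_a − λ_a) − log(1+y) + log(1−y). -/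
noncomputable def gJump (β : ℝ) (y : ℝ) : ℝ :=
  2 * β * y - 2 * β * (mCrit β - lCrit β) - Real.log (1 + y) + Real.log (1 - y)

/-!
Since `1 - m_a ^ 2 = 1 / β`, the derivative `g' y = 2β - 2 / (1 - y ^ 2)` has the sign of
`m_a - |y|` on `(-1, 1)`, so `g` decreases on `(-1, -m_a]`, increases on `[-m_a, m_a]` and decreases
on `[m_a, 1)`. As `g m_a = 0`, the only zero of `g` in `[-m_a, 1)` is `m_a`, whereas on
`(-1, -m_a]` the function falls from `+∞` to `g (-m_a) < 0` and vanishes exactly once.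
-/

open Set Filter Topology

section CriticalOrdinate

variable {β : ℝ}

lemma mCrit_nonneg (β : ℝ) : 0 ≤ mCrit β := Real.sqrt_nonneg _

lemma mCrit_pos (hβ : 1 < β) : 0 < mCrit β :=
  Real.sqrt_pos.2 <| sub_pos.2 <| (div_lt_one (by positivity)).2 hβ

lemma mCrit_lt_one (hβ : 0 < β) : mCrit β < 1 :=
  (Real.sqrt_lt' one_pos).2 <| by linarith [one_div_pos.2 hβ]

lemma mCrit_sq (hβ : 1 ≤ β) : mCrit β ^ 2 = 1 - 1 / β :=
  Real.sq_sqrt <| sub_nonneg.2 <| (div_le_one (by positivity)).2 hβ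

lemma two_mul_mul_lCrit (hβ : 0 < β) :
    2 * β * lCrit β = Real.log (1 + mCrit β) - Real.log (1 - mCrit β) := by
  have hplus : 1 + mCrit β ≠ 0 := by linarith [mCrit_nonneg β]
  have hminus : 1 - mCrit β ≠ 0 := by linarith [mCrit_lt_one hβ]
  rw [← Real.log_div hplus hminus, lCrit, artanh, ← mCrit]
  field_simp

end CriticalOrdinate

section Derivative

variable {β y : ℝ}

lemma hasDerivAt_gJump (β : ℝ) (hy : y ^ 2 ≠ 1) :
    HasDerivAt (gJump β) (2 * β - 2 / (1 - y ^ 2)) y := by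
  have hplus : 1 + y ≠ 0 := fun h => hy (by linear_combination (y - 1) * h)
  have hminus : 1 - y ≠ 0 := fun h => hy (by linear_combination (-y - 1) * h)
  have hlinear := ((hasDerivAt_id y).const_mul (2 * β)).sub_const (2 * β * (mCrit β - lCrit β))
  have hlog_add := ((hasDerivAt_id y).const_add 1).log hplus
  have hlog_sub := ((hasDerivAt_id y).const_sub 1).log hminus
  refine ((hlinear.sub hlog_add).add hlog_sub).congr_deriv ?_
  rw [show 1 - y ^ 2 = (1 + y) * (1 - y) by ring]
  simp only [id]
  field_simp
  ring

lemma continuousOn_gJump (β : ℝ) : ContinuousOn (gJump β) (Ioo (-1) 1) := fun _ hy =>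
  (hasDerivAt_gJump β
    ((sq_lt_one_iff_abs_lt_one _).2 (abs_lt.2 hy)).ne).continuousAt.continuousWithinAt

lemma deriv_gJump (hβ : 1 ≤ β) (hy : y ^ 2 ≠ 1) :
    deriv (gJump β) y = 2 * β * (mCrit β ^ 2 - y ^ 2) / (1 - y ^ 2) := by
  have hden : 1 - y ^ 2 ≠ 0 := sub_ne_zero.2 hy.symm
  rw [(hasDerivAt_gJump β hy).deriv, mCrit_sq hβ]
  field_simp
  ring

lemma deriv_gJump_pos_iff (hβ : 1 ≤ β) (hy : |y| < 1) :
    0 < deriv (gJump β) y ↔ |y| < mCrit β := by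
  have hsq : y ^ 2 < 1 := (sq_lt_one_iff_abs_lt_one y).2 hy
  rw [deriv_gJump hβ hsq.ne, div_pos_iff_of_pos_right (sub_pos.2 hsq),
    mul_pos_iff_of_pos_left (by positivity), sub_pos, sq_lt_sq, abs_of_nonneg (mCrit_nonneg β)]

lemma deriv_gJump_neg_iff (hβ : 1 ≤ β) (hy : |y| < 1) :
    deriv (gJump β) y < 0 ↔ mCrit β < |y| := by
  have hsq : y ^ 2 < 1 := (sq_lt_one_iff_abs_lt_one y).2 hy
  rw [deriv_gJump hβ hsq.ne, div_lt_iff₀ (sub_pos.2 hsq), zero_mul,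
    ← smul_eq_mul, smul_neg_iff_of_pos_left (by positivity), sub_neg, sq_lt_sq,
    abs_of_nonneg (mCrit_nonneg β)]

end Derivative

section Monotonicity

variable {β : ℝ}

lemma strictAntiOn_gJump_Ioc (hβ : 1 ≤ β) :
    StrictAntiOn (gJump β) (Ioc (-1) (-mCrit β)) := by
  have hm := mCrit_nonneg β
  refine strictAntiOn_of_deriv_neg (convex_Ioc _ _)
    ((continuousOn_gJump β).mono fun y hy => ⟨hy.1, by linarith [hy.2]⟩) fun y hy => ?_
  rw [interior_Ioc] at hy
  have habs : |y| = -y := abs_of_neg (by linarith [hy.2])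
  exact (deriv_gJump_neg_iff hβ (by linarith [hy.1])).2 (by linarith [hy.2])

lemma strictMonoOn_gJump_Icc (hβ : 1 ≤ β) :
    StrictMonoOn (gJump β) (Icc (-mCrit β) (mCrit β)) := by
  have hm := mCrit_lt_one (one_pos.trans_le hβ)
  refine strictMonoOn_of_deriv_pos (convex_Icc _ _)
    ((continuousOn_gJump β).mono (Icc_subset_Ioo (by linarith) hm)) fun y hy => ?_
  rw [interior_Icc] at hy
  have habs : |y| < mCrit β := abs_lt.2 hy
  exact (deriv_gJump_pos_iff hβ (habs.trans hm)).2 habs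

lemma strictAntiOn_gJump_Ico (hβ : 1 ≤ β) :
    StrictAntiOn (gJump β) (Ico (mCrit β) 1) := by
  have hm := mCrit_nonneg β
  refine strictAntiOn_of_deriv_neg (convex_Ico _ _)
    ((continuousOn_gJump β).mono fun y hy => ⟨by linarith [hy.1], hy.2⟩) fun y hy => ?_
  rw [interior_Ico] at hy
  have habs : |y| = y := abs_of_pos (by linarith [hy.1])
  exact (deriv_gJump_neg_iff hβ (by linarith [hy.2])).2 (by linarith [hy.1])

end Monotonicity

section Zeros

variable {β y : ℝ}

lemma gJump_mCrit (hβ : 0 < β) : gJump β (mCrit β) = 0 := by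
  rw [gJump]
  linear_combination two_mul_mul_lCrit hβ

lemma gJump_neg_of_mem_Ico (hβ : 1 ≤ β) (hy : y ∈ Ico (-mCrit β) 1) (hne : y ≠ mCrit β) :
    gJump β y < 0 := by
  have hpos : 0 < β := one_pos.trans_le hβ
  have hm := mCrit_nonneg β
  rw [← gJump_mCrit hpos]
  rcases hne.lt_or_gt with hlt | hgt
  · exact strictMonoOn_gJump_Icc hβ ⟨hy.1, hlt.le⟩ (right_mem_Icc.2 (by linarith)) hlt
  · exact strictAntiOn_gJump_Ico hβ (left_mem_Ico.2 (mCrit_lt_one hpos)) ⟨hgt.le, hy.2⟩ hgt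

lemma tendsto_gJump_nhdsGT_neg_one (β : ℝ) : Tendsto (gJump β) (𝓝[>] (-1)) atTop := by
  have hshift : Tendsto (fun y : ℝ => 1 + y) (𝓝[>] (-1)) (𝓝[>] 0) := by
    have hcont : ContinuousWithinAt (fun y : ℝ => 1 + y) (Ioi (-1)) (-1) := by fun_prop
    simpa using hcont.tendsto_nhdsWithin (t := Ioi 0) fun y (hy : -1 < y) => by
      simpa using (by linarith : 0 < 1 + y)
  have hlog : Tendsto (fun y : ℝ => -Real.log (1 + y)) (𝓝[>] (-1)) atTop :=
    tendsto_neg_atBot_atTop.comp (Real.tendsto_log_nhdsGT_zero.comp hshift)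
  have hrest : ContinuousAt
      (fun y : ℝ => 2 * β * y - 2 * β * (mCrit β - lCrit β) + Real.log (1 - y)) (-1) := by
    have hne : (1 - (-1) : ℝ) ≠ 0 := by norm_num
    fun_prop (disch := exact hne)
  refine ((hrest.tendsto.mono_left nhdsWithin_le_nhds).add_atTop hlog).congr fun y => ?_
  rw [gJump]
  ring

lemma exists_mem_Ioo_gJump_eq_zero (hβ : 1 < β) :
    ∃ y ∈ Ioo (-1) (-mCrit β), gJump β y = 0 := by
  have hm := mCrit_pos hβ
  have hm_lt := mCrit_lt_one (one_pos.trans hβ)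
  have hneg : gJump β (-mCrit β) < 0 :=
    gJump_neg_of_mem_Ico hβ.le ⟨le_rfl, by linarith⟩ (by linarith)
  have hlt : -1 < -mCrit β := neg_lt_neg hm_lt
  have hcont : ContinuousOn (gJump β) (Ioc (-1) (-mCrit β)) :=
    (continuousOn_gJump β).mono fun y hy => ⟨hy.1, by linarith [hy.2]⟩
  obtain ⟨y, hy, hy_zero⟩ := isPreconnected_Ioc.intermediate_value_Ici (right_mem_Ioc.2 hlt)
    (le_principal_iff.2 (Ioc_mem_nhdsGT hlt)) hcont (tendsto_gJump_nhdsGT_neg_one β) hneg.le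
  have hy_ne : y ≠ -mCrit β := fun h => hneg.ne (h ▸ hy_zero)
  exact ⟨y, ⟨hy.1, hy.2.lt_of_ne hy_ne⟩, hy_zero⟩

end Zeros

section LocalExtrema

variable {β : ℝ}

lemma isLocalMax_gJump_mCrit (hβ : 1 < β) : IsLocalMax (gJump β) (mCrit β) := by
  have hm := mCrit_pos hβ
  have hm_lt := mCrit_lt_one (one_pos.trans hβ)
  exact isLocalMax_of_mono_anti (neg_lt_self hm) hm_lt
    ((strictMonoOn_gJump_Icc hβ.le).monotoneOn.mono Ioc_subset_Icc_self)
    (strictAntiOn_gJump_Ico hβ.le).antitoneOn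

lemma isLocalMin_gJump_neg_mCrit (hβ : 1 < β) : IsLocalMin (gJump β) (-mCrit β) := by
  have hm := mCrit_pos hβ
  have hm_lt := mCrit_lt_one (one_pos.trans hβ)
  exact isLocalMin_of_anti_mono (neg_lt_neg hm_lt) (neg_lt_self hm)
    (strictAntiOn_gJump_Ioc hβ.le).antitoneOn
    ((strictMonoOn_gJump_Icc hβ.le).monotoneOn.mono Ico_subset_Icc_self)

end LocalExtrema

/-- For β > 1: g(m_a) = 0, g has a unique zero m_b ≠ m_a in (−1,1), m_b < −m_a,
m_a is a local maximum of g, −m_a is a local minimum of g, and g(y) → +∞ as y → −1⁺. -/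
theorem gJump_zeros (β : ℝ) (hβ : 1 < β) :
    gJump β (mCrit β) = 0 ∧
    (∃ m_b ∈ Set.Ioo (-1 : ℝ) 1, m_b ≠ mCrit β ∧ gJump β m_b = 0 ∧ m_b < -mCrit β ∧
      ∀ y ∈ Set.Ioo (-1 : ℝ) 1, y ≠ mCrit β → gJump β y = 0 → y = m_b) ∧
    IsLocalMax (gJump β) (mCrit β) ∧
    IsLocalMin (gJump β) (-(mCrit β)) ∧
    Filter.Tendsto (gJump β) (nhdsWithin (-1) (Set.Ioi (-1))) Filter.atTop := by
  have hm := mCrit_pos hβ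
  obtain ⟨b, ⟨hb_gt, hb_lt⟩, hb_zero⟩ := exists_mem_Ioo_gJump_eq_zero hβ
  refine ⟨gJump_mCrit (one_pos.trans hβ),
    ⟨b, ⟨hb_gt, by linarith⟩, by linarith, hb_zero, hb_lt, fun y hy hne hy_zero => ?_⟩,
    isLocalMax_gJump_mCrit hβ, isLocalMin_gJump_neg_mCrit hβ, tendsto_gJump_nhdsGT_neg_one β⟩
  have hy_le : y ≤ -mCrit β := by
    by_contra! hlt
    exact (gJump_neg_of_mem_Ico hβ.le ⟨hlt.le, hy.2⟩ hne).ne hy_zero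
  exact (strictAntiOn_gJump_Ioc hβ.le).injOn ⟨hy.1, hy_le⟩ ⟨hb_gt, hb_lt.le⟩
    (hy_zero.trans hb_zero.symm)
end

section
/- Let β₁, β₂ ≥ 0, let μ be a Borel probability measure on ℝ, and let m, n : ℝ → ℝ be measurable functions with |m(x)| ≤ 1 and |n(x)| ≤ 1 for all x. Set M := ∫ m dμ and N := ∫ n dμ. Then ∫ [2·tanh(β₁(x + m(x)) + β₂M) − 2m(x) − 2·tanh(β₁(x + n(x)) + β₂N) + 2n(x)]·(m(x) − n(x)) μ(dx) ≤ −2(1 − β₁ − β₂)·∫ (m(x) − n(x))² μ(dx). -/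
open MeasureTheory

/-!
Put `u = m - n`. The nonlinearity is Lipschitz, so the drifts at `m` and `n` differ by at most
`2 K (|β₁| |u| + |β₂| |∫ u|)` apart from the linear relaxation `-2 u`. After multiplying by `u`
and integrating, only the mean-field term `|∫ u| * ∫ |u|` is not yet a multiple of `∫ u ^ 2`, and
Cauchy–Schwarz on a probability space bounds it by `∫ u ^ 2`.
-/

lemma hasDerivAt_tanh_s11 (x : ℝ) : HasDerivAt Real.tanh (1 / Real.cosh x ^ 2) x := by
  have h := (Real.hasDerivAt_sinh x).div (Real.hasDerivAt_cosh x) (Real.cosh_pos x).ne'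
  rw [← sq, ← sq, Real.cosh_sq_sub_sinh_sq] at h
  exact h.congr_of_eventuallyEq (.of_forall Real.tanh_eq_sinh_div_cosh)

lemma lipschitzWith_one_tanh : LipschitzWith 1 Real.tanh := by
  refine lipschitzWith_of_nnnorm_deriv_le (fun x ↦ (hasDerivAt_tanh_s11 x).differentiableAt) fun x ↦ ?_
  rw [← NNReal.coe_le_coe, coe_nnnorm, (hasDerivAt_tanh_s11 x).deriv,
    Real.norm_of_nonneg (by positivity)]
  exact div_le_one_of_le₀ (one_le_pow₀ (Real.one_le_cosh x)) (by positivity)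

section General

variable {Ω : Type*} [MeasurableSpace Ω] {μ : Measure Ω}

lemma memLp_comp_sub_comp_of_lipschitzWith {E F : Type*} [NormedAddCommGroup E]
    [NormedAddCommGroup F] {φ : E → F} {K : NNReal} {p : ENNReal} {a b : Ω → E}
    (hφ : LipschitzWith K φ) (ha : AEStronglyMeasurable a μ) (hb : AEStronglyMeasurable b μ)
    (hab : MemLp (fun x ↦ a x - b x) p μ) : MemLp (fun x ↦ φ (a x) - φ (b x)) p μ :=
  hab.of_le_mul
    ((hφ.continuous.comp_aestronglyMeasurable ha).sub (hφ.continuous.comp_aestronglyMeasurable hb))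
    (.of_forall fun x ↦ hφ.norm_sub_le (a x) (b x))

lemma sq_integral_le_integral_sq [IsProbabilityMeasure μ] {u : Ω → ℝ} (hu : MemLp u 2 μ) :
    (∫ x, u x ∂μ) ^ 2 ≤ ∫ x, u x ^ 2 ∂μ :=
  sub_nonneg.1 <|
    (ProbabilityTheory.variance_nonneg u μ).trans_eq (ProbabilityTheory.variance_eq_sub hu)

lemma abs_integral_mul_integral_abs_le_integral_sq [IsProbabilityMeasure μ] {u : Ω → ℝ}
    (hu : MemLp u 2 μ) : |∫ x, u x ∂μ| * ∫ x, |u x| ∂μ ≤ ∫ x, u x ^ 2 ∂μ :=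
  calc |∫ x, u x ∂μ| * ∫ x, |u x| ∂μ
      ≤ (∫ x, |u x| ∂μ) * ∫ x, |u x| ∂μ := by
        gcongr
        exact abs_integral_le_integral_abs
    _ = (∫ x, |u x| ∂μ) ^ 2 := (sq _).symm
    _ ≤ ∫ x, |u x| ^ 2 ∂μ := sq_integral_le_integral_sq hu.abs
    _ = ∫ x, u x ^ 2 ∂μ := by simp only [sq_abs]

/-- The local field felt at the site `x` when the magnetization profile is `f` and the external
field is `h`: the coupling `β₁` acts on the value at `x` and `β₂` on the mean of `f`. -/
noncomputable def localField (β₁ β₂ : ℝ) (h : Ω → ℝ) (μ : Measure Ω) (f : Ω → ℝ) (x : Ω) : ℝ :=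
  β₁ * (h x + f x) + β₂ * ∫ y, f y ∂μ

/-- The right-hand side of the limit equation for the magnetization profile `f`. The response
function `φ` is `Real.tanh` in the original dynamics, where `h` is the identity of `ℝ`. -/
noncomputable def limitDrift (φ : ℝ → ℝ) (β₁ β₂ : ℝ) (h : Ω → ℝ) (μ : Measure Ω) (f : Ω → ℝ)
    (x : Ω) : ℝ :=
  2 * φ (localField β₁ β₂ h μ f x) - 2 * f x

variable {φ : ℝ → ℝ} {K : NNReal} {h f g : Ω → ℝ}

lemma localField_sub_localField (β₁ β₂ : ℝ) (hf : Integrable f μ) (hg : Integrable g μ) (x : Ω) :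
    localField β₁ β₂ h μ f x - localField β₁ β₂ h μ g x
      = β₁ * (f x - g x) + β₂ * ∫ y, (f y - g y) ∂μ := by
  rw [integral_sub hf hg, localField, localField]
  ring

lemma aestronglyMeasurable_localField (β₁ β₂ : ℝ) (hh : AEStronglyMeasurable h μ)
    (hf : AEStronglyMeasurable f μ) : AEStronglyMeasurable (localField β₁ β₂ h μ f) μ :=
  ((hh.add hf).const_mul β₁).add_const _

lemma memLp_limitDrift_sub_limitDrift [IsFiniteMeasure μ] {p : ENNReal} (hp : 1 ≤ p)
    (hφ : LipschitzWith K φ) (β₁ β₂ : ℝ) (hh : AEStronglyMeasurable h μ)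
    (hf : MemLp f p μ) (hg : MemLp g p μ) :
    MemLp (fun x ↦ limitDrift φ β₁ β₂ h μ f x - limitDrift φ β₁ β₂ h μ g x) p μ := by
  have hfield : MemLp (fun x ↦ localField β₁ β₂ h μ f x - localField β₁ β₂ h μ g x) p μ := by
    simp only [localField_sub_localField β₁ β₂ (hf.integrable hp) (hg.integrable hp)]
    exact ((hf.sub hg).const_mul β₁).add (memLp_const _)
  have hresponse := memLp_comp_sub_comp_of_lipschitzWith hφ
    (aestronglyMeasurable_localField β₁ β₂ hh hf.1) (aestronglyMeasurable_localField β₁ β₂ hh hg.1)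
    hfield
  convert (hresponse.const_mul 2).sub ((hf.sub hg).const_mul 2) using 2 with x
  simp only [limitDrift, Pi.sub_apply]
  ring

lemma limitDrift_sub_mul_sub_le (hφ : LipschitzWith K φ) (β₁ β₂ : ℝ) (hf : Integrable f μ)
    (hg : Integrable g μ) (x : Ω) :
    (limitDrift φ β₁ β₂ h μ f x - limitDrift φ β₁ β₂ h μ g x) * (f x - g x)
      ≤ -2 * (1 - K * |β₁|) * (f x - g x) ^ 2
        + 2 * K * |β₂| * |∫ y, (f y - g y) ∂μ| * |f x - g x| := by
  set a := localField β₁ β₂ h μ f x with ha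
  set b := localField β₁ β₂ h μ g x with hb
  set U := ∫ y, (f y - g y) ∂μ
  have hfield : |a - b| ≤ |β₁| * |f x - g x| + |β₂| * |U| := by
    rw [ha, hb, localField_sub_localField β₁ β₂ hf hg, ← abs_mul, ← abs_mul]
    exact abs_add_le _ _
  have hresponse : (φ a - φ b) * (f x - g x)
      ≤ K * |β₁| * (f x - g x) ^ 2 + K * |β₂| * |U| * |f x - g x| :=
    calc (φ a - φ b) * (f x - g x)
        ≤ |φ a - φ b| * |f x - g x| := (le_abs_self _).trans_eq (abs_mul _ _)
      _ ≤ K * (|β₁| * |f x - g x| + |β₂| * |U|) * |f x - g x| := by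
        gcongr
        exact (hφ.norm_sub_le a b).trans (by gcongr; exact hfield)
      _ = K * |β₁| * (f x - g x) ^ 2 + K * |β₂| * |U| * |f x - g x| := by
        rw [← sq_abs (f x - g x)]
        ring
  simp only [limitDrift, ← ha, ← hb]
  linarith

theorem dissipativity_estimate_general [IsProbabilityMeasure μ] (hφ : LipschitzWith K φ)
    (β₁ β₂ : ℝ) (hh : AEStronglyMeasurable h μ) (hf : MemLp f 2 μ) (hg : MemLp g 2 μ) :
    ∫ x, (limitDrift φ β₁ β₂ h μ f x - limitDrift φ β₁ β₂ h μ g x) * (f x - g x) ∂μ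
      ≤ -2 * (1 - K * |β₁| - K * |β₂|) * ∫ x, (f x - g x) ^ 2 ∂μ := by
  have hu : MemLp (fun x ↦ f x - g x) 2 μ := hf.sub hg
  have hdrift := memLp_limitDrift_sub_limitDrift one_le_two hφ β₁ β₂ hh hf hg
  have hsq := hu.integrable_sq.const_mul (-2 * (1 - K * |β₁|))
  have habs := (hu.integrable one_le_two).abs.const_mul
    (2 * K * |β₂| * |∫ y, (f y - g y) ∂μ|)
  calc ∫ x, (limitDrift φ β₁ β₂ h μ f x - limitDrift φ β₁ β₂ h μ g x) * (f x - g x) ∂μ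
      ≤ ∫ x, (-2 * (1 - K * |β₁|) * (f x - g x) ^ 2
          + 2 * K * |β₂| * |∫ y, (f y - g y) ∂μ| * |f x - g x|) ∂μ :=
        integral_mono (hdrift.integrable_mul hu) (hsq.add habs) <|
          limitDrift_sub_mul_sub_le hφ β₁ β₂ (hf.integrable one_le_two) (hg.integrable one_le_two)
    _ = -2 * (1 - K * |β₁|) * ∫ x, (f x - g x) ^ 2 ∂μ
          + 2 * K * |β₂| * (|∫ x, (f x - g x) ∂μ| * ∫ x, |f x - g x| ∂μ) := by
        rw [integral_add hsq habs, integral_const_mul, integral_const_mul, mul_assoc _ |_|]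
    _ ≤ -2 * (1 - K * |β₁|) * ∫ x, (f x - g x) ^ 2 ∂μ
          + 2 * K * |β₂| * ∫ x, (f x - g x) ^ 2 ∂μ := by
        gcongr
        exact abs_integral_mul_integral_abs_le_integral_sq hu
    _ = -2 * (1 - K * |β₁| - K * |β₂|) * ∫ x, (f x - g x) ^ 2 ∂μ := by ring

end General

/-- Dissipativity estimate for the order-1 hierarchical limit dynamics: for any two bounded
measurable profiles m, n with values in [−1,1],
∫ [2tanh(β₁(x+m(x)) + β₂M) − 2m(x) − 2tanh(β₁(x+n(x)) + β₂N) + 2n(x)]·(m(x)−n(x)) dμ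
  ≤ −2(1 − β₁ − β₂)·∫ (m(x)−n(x))² dμ, where M = ∫m dμ and N = ∫n dμ. -/
theorem dissipativity_estimate (β₁ β₂ : ℝ) (h₁ : 0 ≤ β₁) (h₂ : 0 ≤ β₂)
    (μ : Measure ℝ) [IsProbabilityMeasure μ]
    (m n : ℝ → ℝ) (hm : Measurable m) (hn : Measurable n)
    (hmb : ∀ x, |m x| ≤ 1) (hnb : ∀ x, |n x| ≤ 1) :
    ∫ x, (2 * Real.tanh (β₁ * (x + m x) + β₂ * ∫ y, m y ∂μ) - 2 * m x
          - 2 * Real.tanh (β₁ * (x + n x) + β₂ * ∫ y, n y ∂μ) + 2 * n x)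
        * (m x - n x) ∂μ
      ≤ -2 * (1 - β₁ - β₂) * ∫ x, (m x - n x)^2 ∂μ := by
  have hm₂ : MemLp m 2 μ := .of_bound hm.aestronglyMeasurable 1 (.of_forall hmb)
  have hn₂ : MemLp n 2 μ := .of_bound hn.aestronglyMeasurable 1 (.of_forall hnb)
  simpa only [limitDrift, localField, id, NNReal.coe_one, one_mul, abs_of_nonneg h₁,
    abs_of_nonneg h₂, sub_add] using dissipativity_estimate_general lipschitzWith_one_tanh β₁ β₂
      aestronglyMeasurable_id hm₂ hn₂
end

section
/- Let σ > 0, α₂ > 0, X ∈ ℝ, and let μ be the Gaussian measure on ℝ with mean X and variance σ²/(2α₂). Fix x₀ ∈ ℝ and set M := 1 − 2·μ((−∞, x₀)) (interpreting the measure of the interval as a real number). Then the two conditions 'x − 1 + M + X < 0 for every x < x₀' and 'x + 1 + M + X > 0 for every x > x₀' — i.e., the staircase profile m^{x₀}(x) (equal to +1 for x > x₀ and −1 for x < x₀) satisfies the stationarity equation m^{x₀}(x) = sign(x + m^{x₀}(x) + M + X) for every x ≠ x₀ — hold if and only if −2·μ((x₀, +∞)) ≤ x₀ + X ≤ 2·μ((−∞,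 x₀)). -/
open MeasureTheory ProbabilityTheory

/-- The staircase profile with discontinuity point x₀: +1 for x > x₀, −1 for x < x₀. -/
noncomputable def staircase (x₀ : ℝ) (x : ℝ) : ℝ := if x₀ < x then 1 else -1

/- With the profile `±1` inserted, stationarity says that the field `x ± 1 + M + X`, increasing in
`x`, has the sign of the profile on each side of `x₀`. Since the two half-lines are open, this is
the pair of weak inequalities at the endpoint `-(1 + M) ≤ x₀ + X ≤ 1 - M`. For `M = 1 - 2 μ(Iio x₀)`
the right-hand bound is `2 μ(Iio x₀)`, and the left-hand one is `-2 μ(Ioi x₀)` as soon as `μ` has no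
atom at `x₀`. -/

lemma real_sign_eq_one_iff {r : ℝ} : Real.sign r = 1 ↔ 0 < r := by
  refine ⟨fun h => ?_, Real.sign_of_pos⟩
  by_contra! hr
  rcases hr.lt_or_eq with hneg | rfl
  · norm_num [Real.sign_of_neg hneg] at h
  · norm_num [Real.sign_zero] at h

lemma real_sign_eq_neg_one_iff {r : ℝ} : Real.sign r = -1 ↔ r < 0 := by
  rw [← neg_pos, ← real_sign_eq_one_iff, Real.sign_neg, neg_eq_iff_eq_neg]

section OrderedGroup

variable {G : Type*} [AddGroup G] [LinearOrder G] [AddRightMono G]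

lemma forall_lt_add_neg_iff {a c : G} : (∀ x < a, x + c < 0) ↔ a + c ≤ 0 := by
  simp only [← lt_neg_iff_add_neg, ← le_neg_iff_add_nonpos_right]
  exact forall_lt_iff_le

lemma forall_gt_add_pos_iff {a c : G} : (∀ x > a, 0 < x + c) ↔ 0 ≤ a + c := by
  simp only [← neg_lt_iff_pos_add, ← neg_le_iff_add_nonneg]
  exact forall_gt_iff_le

end OrderedGroup

lemma measureReal_Iio_add_measureReal_Ioi {α : Type*} [LinearOrder α] [TopologicalSpace α]
    [OrderClosedTopology α] [MeasurableSpace α] [OpensMeasurableSpace α] {μ : Measure α}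
    [IsProbabilityMeasure μ] {a : α} (ha : μ {a} = 0) :
    μ.real (Set.Iio a) + μ.real (Set.Ioi a) = 1 := by
  rw [measureReal_congr (Ioi_ae_eq_Ici' ha), ← Set.compl_Iio]
  exact probReal_add_probReal_compl measurableSet_Iio

lemma staircase_of_lt {x₀ x : ℝ} (h : x₀ < x) : staircase x₀ x = 1 := if_pos h

lemma staircase_of_le {x₀ x : ℝ} (h : x ≤ x₀) : staircase x₀ x = -1 := if_neg h.not_gt

lemma forall_staircase_eq_sign_iff (x₀ M X : ℝ) :
    (∀ x ≠ x₀, staircase x₀ x = Real.sign (x + staircase x₀ x + M + X)) ↔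
      (∀ x < x₀, x - 1 + M + X < 0) ∧ (∀ x > x₀, x + 1 + M + X > 0) := by
  simp only [ne_iff_lt_or_gt, or_imp, forall_and]
  refine and_congr (forall₂_congr fun x hx => ?_) (forall₂_congr fun x hx => ?_)
  · rw [staircase_of_le hx.le, eq_comm, real_sign_eq_neg_one_iff, ← sub_eq_add_neg]
  · rw [staircase_of_lt hx, eq_comm, real_sign_eq_one_iff]

lemma forall_field_neg_and_forall_field_pos_iff (x₀ M X : ℝ) :
    (∀ x < x₀, x - 1 + M + X < 0) ∧ (∀ x > x₀, x + 1 + M + X > 0) ↔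
      -(1 + M) ≤ x₀ + X ∧ x₀ + X ≤ 1 - M := by
  have hleft : (∀ x < x₀, x - 1 + M + X < 0) ↔ x₀ + X ≤ 1 - M := by
    simp only [sub_eq_add_neg, add_assoc, forall_lt_add_neg_iff]
    constructor <;> intro h <;> linarith
  have hright : (∀ x > x₀, x + 1 + M + X > 0) ↔ -(1 + M) ≤ x₀ + X := by
    simp only [gt_iff_lt, add_assoc, forall_gt_add_pos_iff]
    constructor <;> intro h <;> linarith
  rw [hleft, hright, and_comm]

theorem staircase_equilibria_general (μ : Measure ℝ) [IsProbabilityMeasure μ] (X : ℝ) {x₀ : ℝ}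
    (hx₀ : μ {x₀} = 0) :
    ((∀ x < x₀, x - 1 + (1 - 2 * μ.real (Set.Iio x₀)) + X < 0) ∧
        (∀ x > x₀, x + 1 + (1 - 2 * μ.real (Set.Iio x₀)) + X > 0) ↔
      -2 * μ.real (Set.Ioi x₀) ≤ x₀ + X ∧ x₀ + X ≤ 2 * μ.real (Set.Iio x₀)) ∧
    ((∀ x ≠ x₀, staircase x₀ x =
        Real.sign (x + staircase x₀ x + (1 - 2 * μ.real (Set.Iio x₀)) + X)) ↔
      -2 * μ.real (Set.Ioi x₀) ≤ x₀ + X ∧ x₀ + X ≤ 2 * μ.real (Set.Iio x₀)) := by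
  have hmass := measureReal_Iio_add_measureReal_Ioi hx₀
  have hlower : -(1 + (1 - 2 * μ.real (Set.Iio x₀))) = -2 * μ.real (Set.Ioi x₀) := by
    linarith
  rw [forall_staircase_eq_sign_iff, and_self, forall_field_neg_and_forall_field_pos_iff,
    hlower, sub_sub_cancel]

/-- Zero-temperature equilibria (Proposition 5.15): with μ = 𝒩(X, σ²/(2α₂)) and
M = 1 − 2μ((−∞,x₀)), the staircase profile m^{x₀} is stationary for the conditional
dynamics — i.e. 'x − 1 + M + X < 0 for x < x₀' and 'x + 1 + M + X > 0 for x > x₀',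
equivalently m^{x₀}(x) = sign(x + m^{x₀}(x) + M + X) for every x ≠ x₀ — if and only if
−2μ((x₀,+∞)) ≤ x₀ + X ≤ 2μ((−∞,x₀)). -/
theorem staircase_equilibria (σ α₂ X x₀ : ℝ) (hσ : 0 < σ) (hα : 0 < α₂) :
    (((∀ x < x₀, x - 1 + (1 - 2 * ((gaussianReal X (Real.toNNReal (σ^2 / (2 * α₂))))
            (Set.Iio x₀)).toReal) + X < 0) ∧
      (∀ x > x₀, x + 1 + (1 - 2 * ((gaussianReal X (Real.toNNReal (σ^2 / (2 * α₂))))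
            (Set.Iio x₀)).toReal) + X > 0)) ↔
      (-2 * ((gaussianReal X (Real.toNNReal (σ^2 / (2 * α₂)))) (Set.Ioi x₀)).toReal
          ≤ x₀ + X ∧
        x₀ + X ≤ 2 * ((gaussianReal X (Real.toNNReal (σ^2 / (2 * α₂))))
          (Set.Iio x₀)).toReal)) ∧
    ((∀ x ≠ x₀, staircase x₀ x =
        Real.sign (x + staircase x₀ x + (1 - 2 * ((gaussianReal X
          (Real.toNNReal (σ^2 / (2 * α₂)))) (Set.Iio x₀)).toReal) + X)) ↔
      (-2 * ((gaussianReal X (Real.toNNReal (σ^2 / (2 * α₂)))) (Set.Ioi x₀)).toReal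
          ≤ x₀ + X ∧
        x₀ + X ≤ 2 * ((gaussianReal X (Real.toNNReal (σ^2 / (2 * α₂))))
          (Set.Iio x₀)).toReal)) := by
  have hv : 0 < σ ^ 2 / (2 * α₂) := by positivity
  have := nullSingletonClass_gaussianReal (μ := X) (Real.toNNReal_pos.mpr hv).ne'
  exact staircase_equilibria_general _ X (measure_singleton x₀)
end
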